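/- arXiv:2009.07305 — 2 statements merged into one kernel-verified Lean document; each statement's English description precedes it below -/
import Mathlib

section
/- If T and T* are finite trees, each with at least 3 vertices, then gp(T □ T*) ≥ gp(T) + gp(T*). -/
open SimpleGraph

/-- A set `S` of vertices of `G` is a general position set if for every three
pairwise-distinct vertices `x, y, z ∈ S` one has `d(x,y) ≠ d(x,z) + d(z,y)`. -/
def IsGenPosSet {V : Type*} (G : SimpleGraph V) (S : Set V) : Prop :=
  ∀ x ∈ S, ∀ y ∈ S, ∀ z ∈ S, x ≠ y → x ≠ z → y ≠ z →
    G.dist x y ≠ G.dist x z + G.dist z y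

/-- The general position number of a graph on a finite vertex type: the
cardinality of a largest general position set. -/
noncomputable def genPosNum {V : Type*} [Fintype V] (G : SimpleGraph V) : ℕ :=
  sSup {n | ∃ S : Finset V, IsGenPosSet G ↑S ∧ S.card = n}

/-- A vertex is a leaf if it has exactly one neighbour (degree 1). -/
def IsLeaf {V : Type*} (G : SimpleGraph V) (v : V) : Prop :=
  ∃! w, G.Adj v w

/-!
Distances in `G □ H` add up coordinatewise. So if `c ∉ S` and no vertex of the general position
set `S` lies on a geodesic from another vertex of `S` to `c`, and likewise for `c'` and `S'`, then
the cross `S × {c'} ∪ {c} × S'` is in general position and has `|S| + |S'|` elements.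

It remains to find a largest general position set `S` of a tree together with such a vertex `c`.
If `|S| ≥ 3`, take distinct `a, b ∈ S` and let `c` be the neighbour of `a` on the path to `b`. Every
path between the two sides of the edge `ac` uses that edge. Hence, if `y ∈ S` were on a geodesic
from `x ∈ S` to `c`, then `y` would be on the geodesic from `x` to `a`, which forces `y = a`; but
then `y` is on the geodesic from `x` to `b`. If `|S| ≤ 2`, replace `S` by two non-adjacent vertices
and take for `c` an inner vertex of a geodesic between them.
-/

section Distance

variable {V W : Type*} {G : SimpleGraph V} {H : SimpleGraph W}

lemma exists_adj_dist_eq_dist_add_one {a b : V} (hreach : G.Reachable a b) (hab : a ≠ b) :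
    ∃ c, G.Adj a c ∧ G.dist b a = G.dist b c + 1 := by
  obtain ⟨p, hp⟩ := hreach.exists_walk_length_eq_dist
  cases p with
  | nil => exact absurd rfl hab
  | @cons _ c _ hac q =>
    rw [Walk.length_cons, dist_comm] at hp
    have hq : G.dist b c ≤ q.length := dist_comm (G := G) ▸ dist_le q
    exact ⟨c, hac, by have := hac.diff_dist_adj (u := b); omega⟩

lemma dist_add_dist_of_mem_support {u v w : V} {p : G.Walk u w} (hp : p.length = G.dist u w)
    (hv : v ∈ p.support) : G.dist u v + G.dist v w = G.dist u w := by
  classical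
  rw [← length_eq_dist_of_subwalk hp (p.isSubwalk_takeUntil hv),
    ← length_eq_dist_of_subwalk hp (p.isSubwalk_dropUntil hv), ← Walk.length_append,
    p.take_spec, hp]

lemma dist_eq_dist_add_one_of_mem_support {a c v x : V} (hac : G.Adj a c)
    (hx : G.dist x c = G.dist x a + 1) {p : G.Walk x a} (hp : p.length = G.dist x a)
    (hv : v ∈ p.support) : G.dist v c = G.dist v a + 1 := by
  classical
  have hadd := dist_add_dist_of_mem_support hp hv
  have htri := (p.takeUntil v hv).reachable.dist_triangle_left c
  have hstep := hac.diff_dist_adj (u := v)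
  omega

lemma length_eq_dist_of_isPath (hG : G.IsAcyclic) {u v : V} {p : G.Walk u v} (hp : p.IsPath) :
    p.length = G.dist u v := by
  obtain ⟨q, hq, hlen⟩ := p.reachable.exists_path_of_dist
  have hpq : (⟨p, hp⟩ : G.Path u v) = ⟨q, hq⟩ := (hG.subsingleton_path u v).elim _ _
  rw [← hlen, Subtype.mk.inj hpq]

lemma dist_eq_of_opposite_sides (hG : G.IsAcyclic) {a c x b : V} (hac : G.Adj a c)
    (hx : G.dist x c = G.dist x a + 1) (hb : G.dist b a = G.dist b c + 1) :
    G.dist x b = G.dist x c + G.dist c b := by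
  have hxa : G.Reachable x a :=
    (Reachable.of_dist_ne_zero (hx ▸ Nat.succ_ne_zero _)).trans hac.symm.reachable
  have hbc : G.Reachable b c :=
    (Reachable.of_dist_ne_zero (hb ▸ Nat.succ_ne_zero _)).trans hac.reachable
  obtain ⟨p, hp, hplen⟩ := hxa.exists_path_of_dist
  obtain ⟨q, hq, hqlen⟩ := hbc.exists_path_of_dist
  have hdisj : p.support.Disjoint q.reverse.support := by
    intro v hvp hvq
    rw [Walk.support_reverse, List.mem_reverse] at hvq
    have hva := dist_eq_dist_add_one_of_mem_support hac hx hplen hvp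
    have hvc := dist_eq_dist_add_one_of_mem_support hac.symm hb hqlen hvq
    omega
  have hpath : (p.append (q.reverse.cons hac)).IsPath := by
    rw [Walk.isPath_def, Walk.support_append, Walk.support_cons, List.tail_cons]
    exact hp.support_nodup.append hq.reverse.support_nodup hdisj
  rw [← length_eq_dist_of_isPath hG hpath, Walk.length_append, Walk.length_cons,
    Walk.length_reverse, hplen, hqlen, hx, dist_comm (u := b)]
  omega

lemma dist_boxProd {x y : V × W} (h₁ : G.Reachable x.1 y.1) (h₂ : H.Reachable x.2 y.2) :
    (G □ H).dist x y = G.dist x.1 y.1 + H.dist x.2 y.2 := by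
  rw [SimpleGraph.dist, edist_boxProd, ENat.toNat_add (edist_ne_top_iff_reachable.mpr h₁)
    (edist_ne_top_iff_reachable.mpr h₂), SimpleGraph.dist, SimpleGraph.dist]

lemma dist_boxProd_swap (x y : V × W) : (H □ G).dist x.swap y.swap = (G □ H).dist x y := by
  rw [SimpleGraph.dist, SimpleGraph.dist, edist_boxProd, edist_boxProd, add_comm, Prod.fst_swap,
    Prod.fst_swap, Prod.snd_swap, Prod.snd_swap]

lemma ne_top_of_isAcyclic [Fintype V] (hG : G.IsAcyclic) (hV : 3 ≤ Fintype.card V) :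
    G ≠ ⊤ := by
  classical
  rintro rfl
  obtain ⟨a, b, d, hab, had, hbd⟩ := Fintype.two_lt_card_iff.mp hV
  exact hG.cliqueFree le_rfl _ (is3Clique_triple_iff.mpr ⟨hab, had, hbd⟩)

end Distance

section GenPosNum

variable {V : Type*} {G : SimpleGraph V}

lemma isGenPosSet_pair (G : SimpleGraph V) (u v : V) : IsGenPosSet G {u, v} := by
  rintro x (rfl | rfl) y (rfl | rfl) z (rfl | rfl) hxy hxz hyz <;> contradiction

lemma bddAbove_card_isGenPosSet [Finite V] (G : SimpleGraph V) :
    BddAbove {n | ∃ S : Finset V, IsGenPosSet G ↑S ∧ S.card = n} := by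
  cases nonempty_fintype V
  exact ⟨Fintype.card V, by rintro _ ⟨S, -, rfl⟩; exact S.card_le_univ⟩

variable [Fintype V]

lemma IsGenPosSet.card_le_genPosNum {S : Finset V} (hS : IsGenPosSet G ↑S) :
    S.card ≤ genPosNum G :=
  le_csSup (bddAbove_card_isGenPosSet G) ⟨S, hS, rfl⟩

lemma exists_isGenPosSet_card_eq_genPosNum (G : SimpleGraph V) :
    ∃ S : Finset V, IsGenPosSet G ↑S ∧ S.card = genPosNum G :=
  Nat.sSup_mem (s := {n | ∃ S : Finset V, IsGenPosSet G ↑S ∧ S.card = n})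
    ⟨0, ∅, by simp [IsGenPosSet], rfl⟩ (bddAbove_card_isGenPosSet G)

end GenPosNum

/-- A vertex `c` is an anchor of `S` if it lies outside `S` and no vertex of `S` lies on a geodesic
from another vertex of `S` to `c`; these are the vertices at which a cross with arm `S` can be
centred. This is weaker than `insert c S` being in general position: `c` itself may lie on a
geodesic between two vertices of `S`. -/
def IsAnchor {V : Type*} (G : SimpleGraph V) (S : Set V) (c : V) : Prop :=
  c ∉ S ∧ ∀ x ∈ S, ∀ y ∈ S, x ≠ y → G.dist x c ≠ G.dist x y + G.dist y c

section Anchor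

variable {V : Type*} {G : SimpleGraph V}

lemma isAnchor_pair_of_dist_eq (hG : G.Connected) {u v c : V} (hcu : c ≠ u) (hcv : c ≠ v)
    (h : G.dist u v = G.dist u c + G.dist c v) : IsAnchor G {u, v} c := by
  have hcu0 := hG.pos_dist_of_ne hcu
  have hcv0 := hG.pos_dist_of_ne hcv
  have huc := dist_comm (G := G) (u := u) (v := c)
  have hvc := dist_comm (G := G) (u := v) (v := c)
  have hvu := dist_comm (G := G) (u := v) (v := u)
  refine ⟨by simp [hcu, hcv], ?_⟩
  rintro x (rfl | rfl) y (rfl | rfl) hxy <;> first | contradiction | omega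

lemma exists_isAnchor_pair_of_ne_top (hG : G.Connected) (htop : G ≠ ⊤) :
    ∃ u v c, u ≠ v ∧ IsAnchor G {u, v} c := by
  obtain ⟨u, v, huv, hnadj⟩ := ne_top_iff_exists_not_adj.mp htop
  obtain ⟨c, huc, hdist⟩ := exists_adj_dist_eq_dist_add_one (hG u v) huv
  have hcv : c ≠ v := fun h => hnadj (h ▸ huc)
  refine ⟨u, v, c, huv, isAnchor_pair_of_dist_eq hG huc.ne' hcv ?_⟩
  rw [dist_eq_one_iff_adj.mpr huc, dist_comm, hdist, dist_comm, add_comm]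

lemma IsGenPosSet.not_adj (hG : G.IsTree) {S : Set V} (hS : IsGenPosSet G S) {a b d : V}
    (ha : a ∈ S) (hb : b ∈ S) (hd : d ∈ S) (had : a ≠ d) (hbd : b ≠ d) : ¬G.Adj a b := by
  intro hab
  have hab1 : G.dist a b = 1 := dist_eq_one_iff_adj.mpr hab
  have hba1 : G.dist b a = 1 := dist_eq_one_iff_adj.mpr hab.symm
  rcases hG.dist_eq_dist_add_one_of_adj d hab with h | h
  · exact hS d hd a ha b hb had.symm hbd.symm hab.ne (by rw [h, hba1])
  · exact hS d hd b hb a ha hbd.symm had.symm hab.ne' (by rw [h, hab1])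

lemma IsGenPosSet.isAnchor_of_adj (hG : G.IsTree) {S : Set V} (hS : IsGenPosSet G S)
    {a b c : V} (ha : a ∈ S) (hb : b ∈ S) (hac : G.Adj a c) (hcS : c ∉ S)
    (hbc : G.dist b a = G.dist b c + 1) : IsAnchor G S c := by
  refine ⟨hcS, fun x hx y hy hxy h => ?_⟩
  have hyc : 0 < G.dist y c := hG.connected.pos_dist_of_ne (ne_of_mem_of_not_mem hy hcS)
  have hxya : G.dist x a = G.dist x y + G.dist y a := by
    have htri := hG.connected.dist_triangle (u := x) (v := y) (w := a)
    rcases hG.dist_eq_dist_add_one_of_adj x hac with hxa | hxc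
    · have hstep := hac.diff_dist_adj (u := y)
      omega
    · rcases hG.dist_eq_dist_add_one_of_adj y hac with hya | hyc
      · have hxyc := dist_eq_of_opposite_sides hG.isAcyclic hac hxc hya
        omega
      · omega
  obtain rfl : y = a := by
    have hxa : x ≠ a := by
      rintro rfl
      have hxy0 := hG.connected.pos_dist_of_ne hxy
      rw [SimpleGraph.dist_self] at hxya
      omega
    by_contra hya
    exact hS x hx a ha y hy hxa hxy (Ne.symm hya) hxya
  have hxc : G.dist x c = G.dist x y + 1 := by rw [h, dist_eq_one_iff_adj.mpr hac]
  have hby : b ≠ y := by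
    rintro rfl
    simp at hbc
  have hxb : x ≠ b := by
    rintro rfl
    omega
  have hyb : G.dist y b = 1 + G.dist c b := by rw [dist_comm, hbc, dist_comm, add_comm]
  refine hS x hx b hb y hy hxb hxy hby ?_
  rw [dist_eq_of_opposite_sides hG.isAcyclic hac hxc hbc, hxc, hyb, add_assoc]

lemma IsGenPosSet.exists_isAnchor (hG : G.IsTree) {S : Set V} (hS : IsGenPosSet G S)
    {a b d : V} (ha : a ∈ S) (hb : b ∈ S) (hd : d ∈ S) (hab : a ≠ b) (had : a ≠ d)
    (hbd : b ≠ d) : ∃ c, IsAnchor G S c := by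
  obtain ⟨c, hac, hbc⟩ := exists_adj_dist_eq_dist_add_one (hG.connected a b) hab
  have hcS : c ∉ S := by
    intro hc
    obtain rfl | hcb := eq_or_ne c b
    · exact hS.not_adj hG ha hc hd had hbd hac
    · exact hS.not_adj hG ha hc hb hab hcb hac
  exact ⟨c, hS.isAnchor_of_adj hG ha hb hac hcS hbc⟩

lemma exists_isGenPosSet_isAnchor_card_eq_genPosNum [Fintype V] (hG : G.IsTree)
    (hV : 3 ≤ Fintype.card V) :
    ∃ (S : Finset V) (c : V), IsGenPosSet G ↑S ∧ IsAnchor G ↑S c ∧ S.card = genPosNum G := by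
  classical
  obtain ⟨S, hS, hcard⟩ := exists_isGenPosSet_card_eq_genPosNum G
  by_cases h : 2 < S.card
  · obtain ⟨a, b, d, ha, hb, hd, hab, had, hbd⟩ := Finset.two_lt_card_iff.mp h
    obtain ⟨c, hc⟩ := hS.exists_isAnchor hG ha hb hd hab had hbd
    exact ⟨S, c, hS, hc, hcard⟩
  · obtain ⟨u, v, c, huv, hc⟩ :=
      exists_isAnchor_pair_of_ne_top hG.connected (ne_top_of_isAcyclic hG.isAcyclic hV)
    rw [← Finset.coe_pair] at hc
    have hpair : IsGenPosSet G ↑({u, v} : Finset V) := by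
      rw [Finset.coe_pair]
      exact isGenPosSet_pair G u v
    refine ⟨{u, v}, c, hpair, hc, hpair.card_le_genPosNum.antisymm ?_⟩
    rw [Finset.card_pair huv, ← hcard]
    exact not_lt.mp h

end Anchor

section Cross

variable {V W : Type*} {G : SimpleGraph V} {H : SimpleGraph W}

/-- The cross in `V × W` with centre `(c, c')` and arms the copies of `S` and `S'` in the two
fibres through the centre, used as a general position set of a box product. The centre belongs to
the cross only if `c ∈ S` or `c' ∈ S'`. -/
def cross (S : Set V) (S' : Set W) (c : V) (c' : W) : Set (V × W) :=
  S ×ˢ {c'} ∪ {c} ×ˢ S'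

lemma swap_mem_cross {S : Set V} {S' : Set W} {c : V} {c' : W} {x : V × W} :
    x.swap ∈ cross S' S c' c ↔ x ∈ cross S S' c c' := by
  simp only [cross, Set.mem_union, Set.mem_prod, Set.mem_singleton_iff, Prod.fst_swap,
    Prod.snd_swap]
  tauto

lemma IsGenPosSet.dist_boxProd_ne_of_mem_cross (hG : G.Connected) (hH : H.Connected)
    {S : Set V} {S' : Set W} {c : V} {c' : W} (hS : IsGenPosSet G S) (hc : IsAnchor G S c)
    {x y : V × W} {z : V} (hx : x ∈ cross S S' c c') (hy : y ∈ cross S S' c c') (hz : z ∈ S)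
    (hxy : x ≠ y) (hxz : x ≠ (z, c')) (hyz : y ≠ (z, c')) :
    (G □ H).dist x y ≠ (G □ H).dist x (z, c') + (G □ H).dist (z, c') y := by
  simp only [dist_boxProd (hG _ _) (hH _ _)]
  obtain ⟨x₁, x₂⟩ := x
  obtain ⟨y₁, y₂⟩ := y
  simp only [cross, Set.mem_union, Set.mem_prod, Set.mem_singleton_iff] at hx hy
  rcases hx with ⟨hx, rfl⟩ | ⟨rfl, -⟩ <;> rcases hy with ⟨hy, rfl⟩ | ⟨rfl, -⟩ <;>
    simp only [ne_eq, Prod.mk.injEq, and_true, true_and] at hxy hxz hyz ⊢ <;> intro h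
  · exact hS _ hx _ hy z hz hxy hxz hyz (by simpa using h)
  · rw [SimpleGraph.dist_self] at h
    exact hc.2 _ hx z hz hxz (by omega)
  · rw [SimpleGraph.dist_self, dist_comm (v := y₁), dist_comm (v := z), dist_comm (v := y₁)] at h
    exact hc.2 _ hy z hz hyz (by omega)
  · have hpos := hG.pos_dist_of_ne (ne_of_mem_of_not_mem hz hc.1)
    have htri := hH.dist_triangle (u := x₂) (v := c') (w := y₂)
    rw [SimpleGraph.dist_self] at h
    omega

lemma IsGenPosSet.isGenPosSet_cross (hG : G.Connected) (hH : H.Connected) {S : Set V} {S' : Set W}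
    {c : V} {c' : W} (hS : IsGenPosSet G S) (hS' : IsGenPosSet H S') (hc : IsAnchor G S c)
    (hc' : IsAnchor H S' c') : IsGenPosSet (G □ H) (cross S S' c c') := by
  rintro x hx y hy ⟨z₁, z₂⟩ (⟨hz, rfl⟩ | ⟨rfl, hz⟩) hxy hxz hyz
  · exact hS.dist_boxProd_ne_of_mem_cross hG hH hc hx hy hz hxy hxz hyz
  · have hswap := hS'.dist_boxProd_ne_of_mem_cross hH hG hc' (swap_mem_cross.mpr hx)
      (swap_mem_cross.mpr hy) hz (Prod.swap_injective.ne hxy) (Prod.swap_injective.ne hxz)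
      (Prod.swap_injective.ne hyz)
    rw [← dist_boxProd_swap, ← dist_boxProd_swap x, ← dist_boxProd_swap _ y]
    exact hswap

lemma IsGenPosSet.card_add_card_le_genPosNum_boxProd [Fintype V] [Fintype W]
    (hG : G.Connected) (hH : H.Connected) {S : Finset V} {S' : Finset W} {c : V} {c' : W}
    (hS : IsGenPosSet G ↑S) (hS' : IsGenPosSet H ↑S') (hc : IsAnchor G ↑S c)
    (hc' : IsAnchor H ↑S' c') : S.card + S'.card ≤ genPosNum (G □ H) := by
  classical
  have hcross : IsGenPosSet (G □ H) ↑(S ×ˢ {c'} ∪ {c} ×ˢ S') := by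
    rw [Finset.coe_union, Finset.coe_product, Finset.coe_product, Finset.coe_singleton,
      Finset.coe_singleton]
    exact hS.isGenPosSet_cross hG hH hS' hc hc'
  have hdisj : Disjoint (S ×ˢ {c'}) ({c} ×ˢ S') :=
    Finset.disjoint_product.mpr (Or.inl (Finset.disjoint_singleton_right.mpr hc.1))
  calc S.card + S'.card = (S ×ˢ {c'} ∪ {c} ×ˢ S').card := by
        rw [Finset.card_union_of_disjoint hdisj, Finset.card_product, Finset.card_product,
          Finset.card_singleton, Finset.card_singleton, mul_one, one_mul]
    _ ≤ genPosNum (G □ H) := hcross.card_le_genPosNum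

end Cross

/-- If `T` and `T*` are finite trees, each with at least 3 vertices, then
`gp(T □ T*) ≥ gp(T) + gp(T*)`. -/
theorem gp_boxProd_trees_ge {V W : Type*} [Fintype V] [Fintype W]
    (T : SimpleGraph V) (T' : SimpleGraph W)
    (hT : T.IsTree) (hT' : T'.IsTree)
    (hV : 3 ≤ Fintype.card V) (hW : 3 ≤ Fintype.card W) :
    genPosNum T + genPosNum T' ≤ genPosNum (T □ T') := by
  obtain ⟨S, c, hS, hc, hcard⟩ := exists_isGenPosSet_isAnchor_card_eq_genPosNum hT hV
  obtain ⟨S', c', hS', hc', hcard'⟩ := exists_isGenPosSet_isAnchor_card_eq_genPosNum hT' hW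
  rw [← hcard, ← hcard']
  exact hS.card_add_card_le_genPosNum_boxProd hT.connected hT'.connected hS' hc hc'
end

section
/- Let G and H be connected graphs and let R be a general position set of the Cartesian product G □ H. If u = (g,h) ∈ R, then the intersection of R with the H-layer through u is {u}, or the intersection of R with the G-layer through u is {u}; that is, {(g', h') ∈ R : g' = g} = {u} or {(g', h') ∈ R : h' = h} = {u}. -/
open SimpleGraph

section BoxProd

variable {V W : Type*} {G : SimpleGraph V} {H : SimpleGraph W} {x y : V × W}

theorem dist_boxProd_of_reachable (hxy : (G □ H).Reachable x y) :
    (G □ H).dist x y = G.dist x.1 y.1 + H.dist x.2 y.2 := by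
  obtain ⟨hG, hH⟩ := reachable_boxProd.1 hxy
  simp only [SimpleGraph.dist, edist_boxProd, ENat.toNat_add (edist_ne_top_iff_reachable.2 hG)
    (edist_ne_top_iff_reachable.2 hH)]

theorem dist_boxProd_eq_dist_add_dist_corner (hxy : (G □ H).Reachable x y) :
    (G □ H).dist x y = (G □ H).dist x (x.1, y.2) + (G □ H).dist (x.1, y.2) y := by
  obtain ⟨hG, hH⟩ := reachable_boxProd.1 hxy
  have hx : (G □ H).Reachable x (x.1, y.2) := reachable_boxProd.2 ⟨.rfl, hH⟩
  have hy : (G □ H).Reachable (x.1, y.2) y := reachable_boxProd.2 ⟨hG, .rfl⟩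
  simp only [dist_boxProd_of_reachable hxy, dist_boxProd_of_reachable hx,
    dist_boxProd_of_reachable hy, dist_self, zero_add, add_comm]

theorem IsGenPosSet.fst_eq_or_snd_eq_of_corner_mem {R : Set (V × W)}
    (hR : IsGenPosSet (G □ H) R) (hxy : (G □ H).Reachable x y)
    (hx : x ∈ R) (hy : y ∈ R) (hcorner : (x.1, y.2) ∈ R) :
    x.1 = y.1 ∨ x.2 = y.2 := by
  by_contra! hne
  obtain ⟨hfst, hsnd⟩ := hne
  have hxy_ne : x ≠ y := fun heq => hfst (Prod.ext_iff.1 heq).1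
  have hx_ne : x ≠ (x.1, y.2) := fun heq => hsnd (Prod.ext_iff.1 heq).2
  have hy_ne : y ≠ (x.1, y.2) := fun heq => hfst (Prod.ext_iff.1 heq).1.symm
  exact hR x hx y hy _ hcorner hxy_ne hx_ne hy_ne (dist_boxProd_eq_dist_add_dist_corner hxy)

end BoxProd

/-- If `R` is a general position set of `G □ H` and `u = (g,h) ∈ R`, then the
intersection of `R` with the `H`-layer through `u` is `{u}`, or the
intersection of `R` with the `G`-layer through `u` is `{u}`. -/
theorem genPos_layer {V W : Type*}
    (G : SimpleGraph V) (H : SimpleGraph W)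
    (hG : G.Connected) (hH : H.Connected)
    (R : Set (V × W)) (hR : IsGenPosSet (G □ H) R)
    (g : V) (h : W) (hu : (g, h) ∈ R) :
    {p ∈ R | p.1 = g} = {(g, h)} ∨ {p ∈ R | p.2 = h} = {(g, h)} := by
  by_cases hlayer : ∀ h', (g, h') ∈ R → h' = h
  · refine .inl (Set.eq_singleton_iff_unique_mem.2 ⟨⟨hu, rfl⟩, ?_⟩)
    rintro ⟨_, h'⟩ ⟨hmem, rfl⟩
    rw [hlayer h' hmem]
  · push Not at hlayer
    obtain ⟨h', hh', hne⟩ := hlayer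
    refine .inr (Set.eq_singleton_iff_unique_mem.2 ⟨⟨hu, rfl⟩, ?_⟩)
    rintro ⟨g', _⟩ ⟨hg', rfl⟩
    have hfst : g = g' := (hR.fst_eq_or_snd_eq_of_corner_mem
      ((hG.boxProd hH).preconnected _ _) hh' hg' hu).resolve_right hne
    rw [hfst]
end
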